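/- For arbitrary nonzero q½, t½: every ℂ-bilinear form B : V × V → ℂ satisfying B(T(f),g) = B(f,T(g)), B(X·f,g) = B(f,Y⁻¹(g)) and B(Y(f),g) = B(f,X⁻¹·g) for all f, g ∈ V is equal to B(1,1)·{·,·}; in particular, if in addition B(1,1) = 0 then B vanishes identically. Consequently V/Rad is the greatest quotient of V carrying a nondegenerate pairing with these invariance properties. -/

import Mathlib

noncomputable section

/-- `V = ℂ[X, X⁻¹]`, the space of complex Laurent polynomials. -/
abbrev V : Type := LaurentPolynomial ℂ

/-- The monomial `X ^ m`. -/
def Xm (m : ℤ) : V := LaurentPolynomial.T m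

/-- The radical of the duality pairing. -/
def Rad (pair : V →ₗ[ℂ] V →ₗ[ℂ] ℂ) : Submodule ℂ V := LinearMap.ker pair

/-!
At `f = 1` the relation `B(Y f, g) = B(f, X⁻¹ g)` reads `B(1, X⁻¹ g) = t½ B(1, g)`, because
`Y 1 = t½`. Hence the functional `B(1, ·)` is `B(1, 1)` times the evaluation at `t⁻½`. The relation
`B(X f, g) = B(f, Y⁻¹ g)` turns `B(Xᵐ, g)` into `B(1, Y⁻ᵐ g)`, which is therefore `B(1, 1)` times
the duality pairing of `Xᵐ` and `g`.
-/

section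

open Function LaurentPolynomial

theorem semiconj_of_semiconj_one {α β : Type*} {f : α → β} {a : ℤ → α → α} {b : ℤ → β → β}
    (ha_zero : a 0 = id) (ha_add : ∀ m n, a (m + n) = a m ∘ a n)
    (hb_zero : b 0 = id) (hb_add : ∀ m n, b (m + n) = b m ∘ b n)
    (h : Semiconj f (a 1) (b 1)) (m : ℤ) : Semiconj f (a m) (b m) := by
  have h_neg_one : Semiconj f (a (-1)) (b (-1)) :=
    h.inverses_right
      (congrFun (by rw [← ha_add, add_neg_cancel, ha_zero] : a 1 ∘ a (-1) = id))
      (congrFun (by rw [← hb_add, neg_add_cancel, hb_zero] : b (-1) ∘ b 1 = id))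
  induction m using Int.induction_on with
  | zero => rw [ha_zero, hb_zero]; exact Semiconj.id_right
  | succ n ih => rw [ha_add, hb_add]; exact ih.comp_right h
  | pred n ih => rw [sub_eq_add_neg, ha_add, hb_add]; exact ih.comp_right h_neg_one

section Semiring

variable {R M : Type*} [Semiring R]

theorem map_T_neg_mul {G : Type*} [Group G] [MulAction G M] {c : G} {φ : R[T;T⁻¹] → M}
    (hφ : ∀ g, φ (T (-1) * g) = c • φ g) (m : ℤ) (g : R[T;T⁻¹]) :
    φ (T (-m) * g) = c ^ m • φ g :=
  semiconj_of_semiconj_one (a := fun k f => T (-k) * f) (b := fun k (x : M) => c ^ k • x)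
    (by funext f; simp)
    (fun k l => by funext f; rw [comp_apply, ← mul_assoc, ← T_add, neg_add])
    (by funext x; simp) (fun k l => by funext x; simp [zpow_add, mul_smul])
    (fun g => (hφ g).trans (by rw [zpow_one])) m g

variable [AddCommMonoid M] [Module R M]

theorem linearMap_ext_T {φ ψ : R[T;T⁻¹] →ₗ[R] M} (h : ∀ m : ℤ, φ (T m) = ψ (T m)) : φ = ψ :=
  AddMonoidAlgebra.lhom_ext' fun m => LinearMap.ext_ring (h m)

theorem eq_eval_smul_map_one {t : Rˣ} {φ : R[T;T⁻¹] →ₗ[R] M}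
    (hφ : ∀ g, φ (T (-1) * g) = t • φ g)
    {ev : R[T;T⁻¹] →ₗ[R] R} (hev : ∀ m : ℤ, ev (T m) = ↑(t ^ (-m))) (g : R[T;T⁻¹]) :
    φ g = ev g • φ 1 := by
  suffices φ = ev.smulRight (φ 1) from LinearMap.congr_fun this g
  refine linearMap_ext_T fun m => ?_
  have h := map_T_neg_mul hφ (-m) 1
  rwa [neg_neg, mul_one, Units.smul_def, ← hev] at h

end Semiring

section CommSemiring

variable {R M : Type*} [CommSemiring R] [AddCommMonoid M] [Module R M]
  {Yz : ℤ → R[T;T⁻¹] →ₗ[R] R[T;T⁻¹]}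
  {B : R[T;T⁻¹] →ₗ[R] R[T;T⁻¹] →ₗ[R] M}

theorem apply_T_eq_apply_one_apply (hYz_zero : Yz 0 = LinearMap.id)
    (hYz_add : ∀ a b : ℤ, Yz (a + b) = Yz a ∘ₗ Yz b)
    (hBX : ∀ f g, B (T 1 * f) g = B f (Yz (-1) g)) (m : ℤ) (g : R[T;T⁻¹]) :
    B (T m) g = B 1 (Yz (-m) g) := by
  have h : Semiconj B (T m * ·) (·.comp (Yz (-m))) :=
    semiconj_of_semiconj_one (a := fun k f => T k * f) (b := fun k φ => φ ∘ₗ Yz (-k))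
      (by funext f; simp)
      (fun k l => by funext f; rw [comp_apply, ← mul_assoc, ← T_add])
      (by funext φ; simp [hYz_zero])
      (fun k l => by funext φ; simp [hYz_add, LinearMap.comp_assoc])
      (fun f => LinearMap.ext (hBX f)) m
  simpa using LinearMap.congr_fun (h 1) g

theorem stmt12_general {t : Rˣ} {ev : R[T;T⁻¹] →ₗ[R] R} (hev : ∀ m : ℤ, ev (T m) = ↑(t ^ (-m)))
    (hYz_zero : Yz 0 = LinearMap.id) (hYz_add : ∀ a b : ℤ, Yz (a + b) = Yz a ∘ₗ Yz b)
    (hYz_one : Yz 1 1 = t • 1)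
    {pair : R[T;T⁻¹] →ₗ[R] R[T;T⁻¹] →ₗ[R] R} (hpair : ∀ m g, pair (T m) g = ev (Yz (-m) g))
    (hBX : ∀ f g, B (T 1 * f) g = B f (Yz (-1) g))
    (hBY : ∀ f g, B (Yz 1 f) g = B f (T (-1) * g)) (f g : R[T;T⁻¹]) :
    B f g = pair f g • B 1 1 := by
  have h_one (g : R[T;T⁻¹]) : B 1 g = ev g • B 1 1 := by
    refine eq_eval_smul_map_one (fun g => ?_) hev g
    rw [← hBY, hYz_one, Units.smul_def, map_smul, LinearMap.smul_apply, Units.smul_def]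
  suffices B.flip g = (pair.flip g).smulRight (B 1 1) from LinearMap.congr_fun this f
  refine linearMap_ext_T fun m => ?_
  calc B (T m) g = B 1 (Yz (-m) g) := apply_T_eq_apply_one_apply hYz_zero hYz_add hBX m g
    _ = ev (Yz (-m) g) • B 1 1 := h_one _
    _ = pair (T m) g • B 1 1 := by rw [hpair]

end CommSemiring

theorem T_sub_one_ne_zero {R : Type*} [Ring R] [Nontrivial R] {n : ℤ} (hn : n ≠ 0) :
    (T n - 1 : R[T;T⁻¹]) ≠ 0 := by
  intro h
  have h_degree : (n : WithBot ℤ) = (0 : ℤ) := by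
    rw [← degree_T (R := R) n, sub_eq_zero.mp h, ← T_zero, degree_T]
  exact hn (WithBot.coe_injective h_degree)

section DemazureLusztig

variable {R : Type*} [CommRing R]

/-- `D` is the Demazure–Lusztig operator `t·s + (t - t⁻¹)·(X² - 1)⁻¹·(s - 1)` with parameter `t`
(the `t½` of the paper) attached to `s`, with the denominator `X² - 1` cleared. -/
def IsDemazureLusztig (t : Rˣ) (s D : R[T;T⁻¹] →ₗ[R] R[T;T⁻¹]) : Prop :=
  ∀ f, (T 2 - 1) * D f
    = (t : R) • ((T 2 - 1) * s f) + ((t : R) - (t⁻¹ : Rˣ)) • (s f - f)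

variable [IsDomain R] {t : Rˣ} {s D : R[T;T⁻¹] →ₗ[R] R[T;T⁻¹]}

theorem IsDemazureLusztig.apply_of_invariant (hD : IsDemazureLusztig t s D) {f : R[T;T⁻¹]}
    (hf : s f = f) : D f = t • f := by
  refine mul_left_cancel₀ (T_sub_one_ne_zero two_ne_zero) ?_
  rw [hD, hf, sub_self, smul_zero, add_zero, mul_smul_comm, Units.smul_def]

theorem IsDemazureLusztig.comp_apply_one (hD : IsDemazureLusztig t s D) (hs : s 1 = 1)
    {p : R[T;T⁻¹] →ₗ[R] R[T;T⁻¹]} (hp : p 1 = 1) : (p ∘ₗ D) 1 = t • 1 := by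
  rw [LinearMap.comp_apply, hD.apply_of_invariant hs, Units.smul_def, map_smul, hp]

end DemazureLusztig

end

/-- every bilinear form `B` on `V` satisfying
`B(T f, g) = B(f, T g)`, `B(X·f, g) = B(f, Y⁻¹ g)` and
`B(Y f, g) = B(f, X⁻¹·g)` equals `B(1,1)·{·,·}`; in particular if moreover
`B(1,1) = 0` then `B = 0`. -/
theorem stmt12
    (q2 t2 : ℂ) (hq2 : q2 ≠ 0) (ht2 : t2 ≠ 0)
    (S Top Pi Y : V →ₗ[ℂ] V)
    (hS : ∀ m : ℤ, S (Xm m) = Xm (-m))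
    (hPi : ∀ m : ℤ, Pi (Xm m) = q2 ^ m • Xm (-m))
    (hT : ∀ f : V, (Xm 2 - 1) * Top f
        = t2 • ((Xm 2 - 1) * S f) + (t2 - t2⁻¹) • (S f - f))
    (hY : Y = Pi ∘ₗ Top)
    (ev : V →ₗ[ℂ] ℂ) (hev : ∀ m : ℤ, ev (Xm m) = t2 ^ (-m))
    (Yz : ℤ → V →ₗ[ℂ] V)
    (hYz0 : Yz 0 = LinearMap.id) (hYz1 : Yz 1 = Y)
    (hYzadd : ∀ a b : ℤ, Yz (a + b) = Yz a ∘ₗ Yz b)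
    (pair : V →ₗ[ℂ] V →ₗ[ℂ] ℂ)
    (hpair : ∀ (m : ℤ) (g : V), pair (Xm m) g = ev (Yz (-m) g))
    :
    ∀ B : V →ₗ[ℂ] V →ₗ[ℂ] ℂ,
      (∀ f g : V, B (Top f) g = B f (Top g)) →
      (∀ f g : V, B (Xm 1 * f) g = B f (Yz (-1) g)) →
      (∀ f g : V, B (Y f) g = B f (Xm (-1) * g)) →
      (∀ f g : V, B f g = B 1 1 * pair f g) ∧
      (B 1 1 = 0 → ∀ f g : V, B f g = 0) := by
  intro B _ hBX hBY
  subst hYz1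
  have hTop : IsDemazureLusztig (Units.mk0 t2 ht2) S Top := hT
  have hY_one : Yz 1 1 = Units.mk0 t2 ht2 • 1 :=
    hY ▸ hTop.comp_apply_one (by simpa [Xm] using hS 0) (by simpa [Xm] using hPi 0)
  have h (f g : V) : B f g = pair f g • B 1 1 :=
    stmt12_general (by simpa [Xm] using hev) hYz0 hYzadd hY_one hpair hBX hBY f g
  exact ⟨fun f g => (h f g).trans (mul_comm _ _), fun h0 f g => by rw [h, h0, smul_zero]⟩
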